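/- Let B ⊆ {2,…,K} be nonempty, let I_a > 0 for each a ∈ B, and, if B̄^c ≠ ∅, fix values N_a ≥ 0 for a ∈ B̄^c. Define N_{1,1} = 0 if B̄^c = ∅ or Σ_{a∈B̄^c} N_a = 0, and otherwise let N_{1,1} be the unique N_1 > 0 with Σ_{a∈B̄^c} d(μ_1, x_{1,a}(N_1, N_a))/d(μ_a, x_{1,a}(N_1, N_a)) = 1 (the left-hand side decreases continuously and strictly from ∞ to 0 as N_1 increases from 0 to ∞, so N_{1,1} is well defined); set N_{1,2} = max_{a∈B} I_a/d(μ_1, μ_a). Then there exist a unique N_1* ≥ 0 and unique (N_a* ≥ 0 : a ∈ B) such that, setting N_a* := N_a for a ∈ B̄^c, one has Σ_{a=2}^K d(μ_1, x_{1,a}(N_1*, N_a*))/d(μ_a, x_{1,a}(N_1*, N_a*)) = 1 and W_a(N_1*, N_a*) = I_a for every a ∈ B. Moreover N_1* ≥ max(N_{1,1}, N_{1,2}) and N_a* ≥ I_a/d(μ_a, μ_1) for every a ∈ B. -/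

import Mathlib

open scoped BigOperators

/-- A single-parameter exponential family, given by the log-partition function `b`,
smooth with positive second derivative on an open interval `Θ`, together with the
inverse `θof` of `b'` on the set of means `S = b'(Θ)`. -/
structure SPEF where
  Θ : Set ℝ
  Θ_isOpen : IsOpen Θ
  Θ_ordConnected : Set.OrdConnected Θ
  Θ_nonempty : Θ.Nonempty
  b : ℝ → ℝ
  b_smooth : ContDiffOn ℝ (⊤ : ℕ∞) b Θ
  b_conv : ∀ t ∈ Θ, 0 < iteratedDeriv 2 b t
  θof : ℝ → ℝ
  θof_mem : ∀ μ ∈ deriv b '' Θ, θof μ ∈ Θ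
  θof_spec : ∀ μ ∈ deriv b '' Θ, deriv b (θof μ) = μ

namespace SPEF

/-- The set of means of the family. -/
def S (F : SPEF) : Set ℝ := deriv F.b '' F.Θ

/-- KL divergence `d(μ, x)` between the members of the family with means `μ` and `x`. -/
noncomputable def d (F : SPEF) (μ x : ℝ) : ℝ :=
  (F.θof μ - F.θof x) * μ - F.b (F.θof μ) + F.b (F.θof x)

end SPEF

/-- A `K`-armed bandit instance with arm distributions in a fixed SPEF; arm `0`
(the paper's arm `1`) is the unique best arm. -/
structure Bandit (K : ℕ) [NeZero K] extends SPEF where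
  two_le : 2 ≤ K
  μ : Fin K → ℝ
  μ_mem : ∀ a, μ a ∈ SPEF.S toSPEF
  μ_best : ∀ a : Fin K, a ≠ 0 → μ a < μ 0

namespace Bandit

variable {K : ℕ} [NeZero K]

/-- KL divergence of the underlying family. -/
noncomputable def d (M : Bandit K) : ℝ → ℝ → ℝ := M.toSPEF.d

/-- The weighted mean `x_{1,a}(N₁, N_a)`. -/
noncomputable def x1 (M : Bandit K) (a : Fin K) (N1 Na : ℝ) : ℝ :=
  (N1 * M.μ 0 + Na * M.μ a) / (N1 + Na)

/-- The index `W_a(N₁, N_a)` of an arm `a ≠ 1`. -/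
noncomputable def W (M : Bandit K) (a : Fin K) (N1 Na : ℝ) : ℝ :=
  N1 * M.d (M.μ 0) (M.x1 a N1 Na) + Na * M.d (M.μ a) (M.x1 a N1 Na)

/-- The set `{2, …, K}` of suboptimal arms. -/
def alt (K : ℕ) [NeZero K] : Finset (Fin K) := Finset.univ.filter (fun a => a ≠ 0)

/-- The anchor function `g(μ, N)`. -/
noncomputable def g (M : Bandit K) (Nv : Fin K → ℝ) : ℝ :=
  (∑ a ∈ alt K, M.d (M.μ 0) (M.x1 a (Nv 0) (Nv a)) / M.d (M.μ a) (M.x1 a (Nv 0) (Nv a))) - 1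

end Bandit

open Bandit

/-!
The weighted mean `x` of `u` and `v` minimises `y ↦ N d(u, y) + m d(v, y)`, and the index is the
minimum. Hence the index is strictly increasing in both weights and lies below `N d(u, v)` and
`m d(v, u)`, which gives the bounds involving `I`. For each arm of `B` the equation `W(N, m) = I`
therefore defines `m` as a strictly decreasing function of `N > I / d(u, v)`; exchanging the roles
of the two arms shows that this function is onto `(I / d(v, u), ∞)`, so it is continuous. Along it
the mean `x` increases with `N`, and `d(u, x) / d(v, x)` decreases, as it also does for an arm of
fixed weight. So the anchor sum is continuous and tends to `0`, and it exceeds `1` near the left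
end, where the ratio of an arm attaining the maximum of `I / d(u, v)` blows up. Uniqueness and the
bound by `N_{1,1}` follow from the same monotonicity.
-/

open Set Filter Topology

section StrictMonoOn

variable {α β : Type*} [LinearOrder α] [TopologicalSpace α] [OrderTopology α]
  [LinearOrder β] [TopologicalSpace β] [OrderTopology β] {f : α → β} {s : Set α}

theorem continuousOn_of_strictMonoOn_of_ordConnected_image (hf : StrictMonoOn f s)
    (hs : s.OrdConnected) (hfs : (f '' s).OrdConnected) : ContinuousOn f s := by
  rw [continuousOn_iff_continuous_domRestrict]
  exact continuous_subtype_val.comp (hf.orderIso f s).continuous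

theorem continuousOn_of_strictAntiOn_of_ordConnected_image (hf : StrictAntiOn f s)
    (hs : s.OrdConnected) (hfs : (f '' s).OrdConnected) : ContinuousOn f s :=
  continuousOn_of_strictMonoOn_of_ordConnected_image (β := βᵒᵈ) (f := OrderDual.toDual ∘ f)
    hf.dual_right hs hfs.dual

end StrictMonoOn

namespace SPEF

section Divergence

variable (F : SPEF)

theorem strictConvexOn_b : StrictConvexOn ℝ F.Θ F.b :=
  strictConvexOn_of_deriv2_pos' F.Θ_ordConnected.convex F.b_smooth.continuousOn fun t ht => by
    simpa only [iteratedDeriv_eq_iterate] using F.b_conv t ht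

theorem differentiableAt_b {t : ℝ} (ht : t ∈ F.Θ) : DifferentiableAt ℝ F.b t :=
  (F.b_smooth.contDiffAt (F.Θ_isOpen.mem_nhds ht)).differentiableAt (by simp)

theorem strictMonoOn_deriv_b : StrictMonoOn (deriv F.b) F.Θ :=
  F.strictConvexOn_b.strictMonoOn_deriv fun _ => F.differentiableAt_b

theorem ordConnected_S : F.S.OrdConnected :=
  (F.Θ_ordConnected.isPreconnected.image _ (F.b_smooth.continuousOn_deriv_of_isOpen F.Θ_isOpen
    (by exact_mod_cast le_top))).ordConnected

theorem strictMonoOn_θof : StrictMonoOn F.θof F.S := by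
  intro x hx y hy hxy
  rwa [← F.strictMonoOn_deriv_b.lt_iff_lt (F.θof_mem x hx) (F.θof_mem y hy), F.θof_spec x hx,
    F.θof_spec y hy]

theorem image_θof : F.θof '' F.S = F.Θ := by
  refine Subset.antisymm (image_subset_iff.2 F.θof_mem) fun t ht => ?_
  have hS : deriv F.b t ∈ F.S := mem_image_of_mem _ ht
  exact ⟨_, hS, F.strictMonoOn_deriv_b.injOn (F.θof_mem _ hS) ht (F.θof_spec _ hS)⟩

theorem continuousOn_θof : ContinuousOn F.θof F.S :=
  continuousOn_of_strictMonoOn_of_ordConnected_image F.strictMonoOn_θof F.ordConnected_S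
    (F.image_θof.symm ▸ F.Θ_ordConnected)

theorem continuousOn_d (u : ℝ) : ContinuousOn (F.d u) F.S := by
  have hb : ContinuousOn (fun x => F.b (F.θof x)) F.S :=
    F.b_smooth.continuousOn.comp F.continuousOn_θof F.θof_mem
  have hθ := F.continuousOn_θof
  unfold d
  fun_prop

theorem d_self (x : ℝ) : F.d x x = 0 := by
  simp [d]

theorem d_three_point (u x y : ℝ) :
    F.d u y = F.d u x + F.d x y + (F.θof x - F.θof y) * (u - x) := by
  unfold d
  ring

variable {F} {u v x y : ℝ}

theorem d_pos (hx : x ∈ F.S) (hy : y ∈ F.S) (hxy : x ≠ y) : 0 < F.d x y := by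
  have hs := F.θof_mem x hx
  have ht := F.θof_mem y hy
  have hdiff := F.differentiableAt_b hs
  unfold d
  rcases hxy.lt_or_gt with h | h
  · have hθ := F.strictMonoOn_θof hx hy h
    have hslope := F.strictConvexOn_b.deriv_lt_slope hs ht hθ hdiff
    rw [F.θof_spec x hx, slope_def_field, lt_div_iff₀ (sub_pos.2 hθ)] at hslope
    linarith
  · have hθ := F.strictMonoOn_θof hy hx h
    have hslope := F.strictConvexOn_b.slope_lt_deriv ht hs hθ hdiff
    rw [F.θof_spec x hx, slope_def_field, div_lt_iff₀ (sub_pos.2 hθ)] at hslope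
    linarith

theorem d_nonneg (hx : x ∈ F.S) (hy : y ∈ F.S) : 0 ≤ F.d x y := by
  rcases eq_or_ne x y with rfl | h
  · exact (F.d_self x).ge
  · exact (d_pos hx hy h).le

theorem strictAntiOn_d_of_le (F : SPEF) (u : ℝ) : StrictAntiOn (F.d u) (F.S ∩ Iic u) := by
  intro x hx y hy hxy
  have hdyx := d_pos hy.1 hx.1 hxy.ne'
  have hcross := mul_nonneg (sub_nonneg.2 (F.strictMonoOn_θof hx.1 hy.1 hxy).le)
    (sub_nonneg.2 hy.2)
  linarith [F.d_three_point u y x]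

theorem strictMonoOn_d_of_ge (F : SPEF) (v : ℝ) : StrictMonoOn (F.d v) (F.S ∩ Ici v) := by
  intro x hx y hy hxy
  have hdxy := d_pos hx.1 hy.1 hxy.ne
  have hcross := mul_nonneg (sub_nonneg.2 (F.strictMonoOn_θof hx.1 hy.1 hxy).le)
    (sub_nonneg.2 hx.2)
  linarith [F.d_three_point v x y]

theorem strictAntiOn_d_div_d (hu : u ∈ F.S) (hv : v ∈ F.S) :
    StrictAntiOn (fun x => F.d u x / F.d v x) (Ioc v u) := by
  intro x hx y hy hxy
  have hS : Ioc v u ⊆ F.S := Ioc_subset_Icc_self.trans (F.ordConnected_S.out hv hu)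
  exact div_lt_div₀ (F.strictAntiOn_d_of_le u ⟨hS hx, hx.2⟩ ⟨hS hy, hy.2⟩ hxy)
    (F.strictMonoOn_d_of_ge v ⟨hS hx, hx.1.le⟩ ⟨hS hy, hy.1.le⟩ hxy).le (d_nonneg hu (hS hx))
    (d_pos hv (hS hx) hx.1.ne)

end Divergence

section Mix

variable {F : SPEF} {u v N N' m m' : ℝ}

/-- The mean of `u` and `v` with weights `N` and `m`, that is `x_{1,a}(N, m)` for `u = μ₁` and
`v = μ_a`. At `N = m = 0` it has the junk value `0`. -/
noncomputable def mix (u v N m : ℝ) : ℝ := (N * u + m * v) / (N + m)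

theorem mix_comm (u v N m : ℝ) : mix u v N m = mix v u m N := by
  simp only [mix, add_comm]

theorem mix_mul_mul {c : ℝ} (hc : c ≠ 0) : mix u v (c * N) (c * m) = mix u v N m := by
  rw [mix, mix, mul_assoc, mul_assoc, ← mul_add, ← mul_add, mul_div_mul_left _ _ hc]

theorem mix_mem_S (hu : u ∈ F.S) (hv : v ∈ F.S) (hN : 0 ≤ N) (hm : 0 ≤ m) (h : 0 < N + m) :
    mix u v N m ∈ F.S := by
  convert convex_iff_div.1 F.ordConnected_S.convex hu hv hN hm h using 1
  rw [mix, smul_eq_mul, smul_eq_mul]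
  ring

theorem sub_mix (h : N + m ≠ 0) : u - mix u v N m = m * (u - v) / (N + m) := by
  unfold mix
  field_simp
  ring

theorem mix_ne_left (huv : u ≠ v) (hm : m ≠ 0) (h : N + m ≠ 0) : mix u v N m ≠ u := by
  rw [ne_comm, ← sub_ne_zero, sub_mix h]
  exact div_ne_zero (mul_ne_zero hm (sub_ne_zero.2 huv)) h

theorem mix_le_left (huv : v ≤ u) (hm : 0 ≤ m) (h : 0 < N + m) : mix u v N m ≤ u := by
  rw [← sub_nonneg, sub_mix h.ne']
  exact div_nonneg (mul_nonneg hm (sub_nonneg.2 huv)) h.le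

theorem right_lt_mix (huv : v < u) (hN : 0 < N) (h : 0 < N + m) : v < mix u v N m := by
  rw [mix, lt_div_iff₀ h]
  linarith [mul_lt_mul_of_pos_left huv hN]

theorem mix_mem_Ioc (huv : v < u) (hN : 0 < N) (hm : 0 ≤ m) : mix u v N m ∈ Ioc v u :=
  have h : 0 < N + m := add_pos_of_pos_of_nonneg hN hm
  ⟨right_lt_mix huv hN h, mix_le_left huv.le hm h⟩

theorem mix_le_mix_iff (huv : v < u) (h : 0 < N + m) (h' : 0 < N' + m') :
    mix u v N m ≤ mix u v N' m' ↔ N * m' ≤ N' * m := by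
  rw [← sub_le_sub_iff_left u, sub_mix h.ne', sub_mix h'.ne', div_le_div_iff₀ h' h,
    ← sub_nonneg, ← sub_nonneg (b := N * m'),
    show m * (u - v) * (N' + m') - m' * (u - v) * (N + m) = (u - v) * (N' * m - N * m') by ring,
    mul_nonneg_iff_of_pos_left (sub_pos.2 huv)]

theorem mix_lt_mix_iff (huv : v < u) (h : 0 < N + m) (h' : 0 < N' + m') :
    mix u v N m < mix u v N' m' ↔ N * m' < N' * m := by
  rw [← not_le, mix_le_mix_iff huv h' h, not_le]

theorem continuousOn_mix {f g : ℝ → ℝ} {s : Set ℝ} (hf : ContinuousOn f s)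
    (hg : ContinuousOn g s) (h : ∀ t ∈ s, f t + g t ≠ 0) :
    ContinuousOn (fun t => mix u v (f t) (g t)) s :=
  ((hf.mul continuousOn_const).add (hg.mul continuousOn_const)).div (hf.add hg) h

theorem tendsto_mix_left (u v m : ℝ) : Tendsto (fun N => mix u v N m) atTop (𝓝 u) := by
  have hlim : Tendsto (fun N => u - m * (u - v) / (N + m)) atTop (𝓝 (u - 0)) :=
    tendsto_const_nhds.sub
      (tendsto_const_nhds.div_atTop (tendsto_atTop_add_const_right _ m tendsto_id))
  rw [sub_zero] at hlim
  refine hlim.congr' ?_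
  filter_upwards [eventually_gt_atTop (-m)] with N hN
  rw [← sub_mix (by linarith), sub_sub_cancel]

theorem tendsto_d_mix_left (hu : u ∈ F.S) (hv : v ∈ F.S) (w : ℝ) (hm : 0 ≤ m) :
    Tendsto (fun N => F.d w (mix u v N m)) atTop (𝓝 (F.d w u)) := by
  refine (F.continuousOn_d w u hu).tendsto.comp
    (tendsto_nhdsWithin_iff.2 ⟨tendsto_mix_left u v m, ?_⟩)
  filter_upwards [eventually_gt_atTop 0] with N hN
  exact mix_mem_S hu hv hN.le hm (add_pos_of_pos_of_nonneg hN hm)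

theorem tendsto_d_mix_right (hu : u ∈ F.S) (hv : v ∈ F.S) (w : ℝ) (hN : 0 ≤ N) :
    Tendsto (fun m => F.d w (mix u v N m)) atTop (𝓝 (F.d w v)) := by
  simpa only [mix_comm u v] using tendsto_d_mix_left hv hu w hN

end Mix

section Index

variable {F : SPEF} {u v y c I N N' m m' : ℝ}

/-- The index of an arm of mean `v` and weight `m` against an arm of mean `u` and weight `N`,
that is `W_a(N, m)` for `u = μ₁` and `v = μ_a`. -/
noncomputable def index (F : SPEF) (u v N m : ℝ) : ℝ :=
  N * F.d u (mix u v N m) + m * F.d v (mix u v N m)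

theorem index_comm (F : SPEF) (u v N m : ℝ) : F.index u v N m = F.index v u m N := by
  rw [index, index, mix_comm v u, add_comm]

theorem index_mul_mul (hc : c ≠ 0) : F.index u v (c * N) (c * m) = c * F.index u v N m := by
  rw [index, index, mix_mul_mul hc]
  ring

theorem index_add_mul_d_mix (h : N + m ≠ 0) (y : ℝ) :
    F.index u v N m + (N + m) * F.d (mix u v N m) y = N * F.d u y + m * F.d v y := by
  have hmean : N * (u - mix u v N m) + m * (v - mix u v N m) = 0 := by
    unfold mix
    field_simp
    ring
  rw [index, F.d_three_point u (mix u v N m) y, F.d_three_point v (mix u v N m) y]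
  linear_combination (F.θof y - F.θof (mix u v N m)) * hmean

theorem index_le (hu : u ∈ F.S) (hv : v ∈ F.S) (hN : 0 ≤ N) (hm : 0 ≤ m) (hy : y ∈ F.S) :
    F.index u v N m ≤ N * F.d u y + m * F.d v y := by
  rcases (add_nonneg hN hm).eq_or_lt' with h | h
  · obtain ⟨rfl, rfl⟩ := (add_eq_zero_iff_of_nonneg hN hm).1 h
    simp [index]
  · rw [← index_add_mul_d_mix h.ne' y, le_add_iff_nonneg_right]
    exact mul_nonneg h.le (d_nonneg (mix_mem_S hu hv hN hm h) hy)

theorem index_le_mul_d_left (hu : u ∈ F.S) (hv : v ∈ F.S) (hN : 0 ≤ N) (hm : 0 ≤ m) :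
    F.index u v N m ≤ N * F.d u v := by
  simpa [d_self] using index_le hu hv hN hm hv

theorem index_pos (hu : u ∈ F.S) (hv : v ∈ F.S) (huv : u ≠ v) (hN : 0 < N) (hm : 0 < m) :
    0 < F.index u v N m := by
  have h : 0 < N + m := add_pos hN hm
  have hS := mix_mem_S hu hv hN.le hm.le h
  exact add_pos_of_pos_of_nonneg (mul_pos hN (d_pos hu hS (mix_ne_left huv hm.ne' h.ne').symm))
    (mul_nonneg hm.le (d_nonneg hv hS))

-- For `m < m'`, evaluate the variational bound for the weight `m` at the minimiser for `m'`.
theorem strictMonoOn_index_right (hu : u ∈ F.S) (hv : v ∈ F.S) (huv : u ≠ v) (hN : 0 < N) :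
    StrictMonoOn (F.index u v N) (Ici 0) := by
  intro m hm m' hm' hlt
  have h : 0 < N + m' := add_pos_of_pos_of_nonneg hN hm'
  have hS := mix_mem_S hu hv hN.le hm' h
  have hne : v ≠ mix u v N m' := by
    rw [mix_comm]
    exact (mix_ne_left huv.symm hN.ne' (by linarith)).symm
  calc F.index u v N m ≤ N * F.d u (mix u v N m') + m * F.d v (mix u v N m') :=
        index_le hu hv hN.le hm hS
    _ < F.index u v N m' := by
        rw [index]
        gcongr
        exact d_pos hv hS hne

theorem strictMonoOn_index_left (hu : u ∈ F.S) (hv : v ∈ F.S) (huv : u ≠ v) (hm : 0 < m) :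
    StrictMonoOn (F.index u v · m) (Ici 0) := by
  simpa only [index_comm F u v] using strictMonoOn_index_right hv hu huv.symm hm

theorem index_lt_mul_d_left (hu : u ∈ F.S) (hv : v ∈ F.S) (huv : u ≠ v) (hN : 0 < N)
    (hm : 0 ≤ m) : F.index u v N m < N * F.d u v :=
  have hm' : 0 ≤ m + 1 := by linarith
  (strictMonoOn_index_right hu hv huv hN hm hm' (lt_add_one m)).trans_le
    (index_le_mul_d_left hu hv hN.le hm')

theorem right_lt_right_of_index_eq (hu : u ∈ F.S) (hv : v ∈ F.S) (huv : u ≠ v) (hN : 0 < N)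
    (hlt : N < N') (hm : 0 < m) (hm' : 0 ≤ m') (h : F.index u v N m = F.index u v N' m') :
    m' < m := by
  have hN' := hN.trans hlt
  rw [← (strictMonoOn_index_right hu hv huv hN').lt_iff_lt hm' hm.le, ← h]
  exact strictMonoOn_index_left hu hv huv hm hN.le hN'.le hlt

theorem div_d_le_left_of_index_eq (hu : u ∈ F.S) (hv : v ∈ F.S) (huv : u ≠ v) (hN : 0 ≤ N)
    (hm : 0 ≤ m) (h : F.index u v N m = I) : I / F.d u v ≤ N := by
  rw [div_le_iff₀ (d_pos hu hv huv), ← h]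
  exact index_le_mul_d_left hu hv hN hm

theorem div_d_lt_left_of_index_eq (hu : u ∈ F.S) (hv : v ∈ F.S) (huv : u ≠ v) (hN : 0 < N)
    (hm : 0 ≤ m) (h : F.index u v N m = I) : I / F.d u v < N := by
  rw [div_lt_iff₀ (d_pos hu hv huv), ← h]
  exact index_lt_mul_d_left hu hv huv hN hm

theorem div_d_le_right_of_index_eq (hu : u ∈ F.S) (hv : v ∈ F.S) (huv : u ≠ v) (hN : 0 ≤ N)
    (hm : 0 ≤ m) (h : F.index u v N m = I) : I / F.d v u ≤ m :=
  div_d_le_left_of_index_eq hv hu huv.symm hm hN (F.index_comm u v N m ▸ h)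

theorem continuousOn_index_right (hu : u ∈ F.S) (hv : v ∈ F.S) (hN : 0 < N) :
    ContinuousOn (F.index u v N) (Ici 0) := by
  have hpos : ∀ m ∈ Ici (0 : ℝ), 0 < N + m := fun m hm => add_pos_of_pos_of_nonneg hN hm
  have hmix : ContinuousOn (fun m => mix u v N m) (Ici 0) :=
    continuousOn_mix continuousOn_const continuousOn_id fun m hm => (hpos m hm).ne'
  have hd (w : ℝ) : ContinuousOn (fun m => F.d w (mix u v N m)) (Ici 0) :=
    (F.continuousOn_d w).comp hmix fun m hm => mix_mem_S hu hv hN.le hm (hpos m hm)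
  exact (continuousOn_const.mul (hd u)).add (continuousOn_id.mul (hd v))

theorem tendsto_index_right (hu : u ∈ F.S) (hv : v ∈ F.S) (hN : 0 < N) :
    Tendsto (F.index u v N) atTop (𝓝 (N * F.d u v)) := by
  refine tendsto_of_tendsto_of_tendsto_of_le_of_le'
    ((tendsto_d_mix_right hu hv u hN.le).const_mul N) tendsto_const_nhds ?_ ?_
  · filter_upwards [eventually_ge_atTop 0] with m hm
    have hS := mix_mem_S hu hv hN.le hm (add_pos_of_pos_of_nonneg hN hm)
    exact le_add_of_nonneg_right (mul_nonneg hm (d_nonneg hv hS))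
  · filter_upwards [eventually_ge_atTop 0] with m hm
    exact index_le_mul_d_left hu hv hN.le hm

theorem exists_index_eq (hu : u ∈ F.S) (hv : v ∈ F.S) (huv : u ≠ v) (hI : 0 < I)
    (hN : I / F.d u v < N) : ∃ m ∈ Ioi 0, F.index u v N m = I := by
  have hd := d_pos hu hv huv
  have hN0 : 0 < N := (div_pos hI hd).trans hN
  have hzero : F.index u v N 0 ≤ 0 := by simpa [d_self] using index_le hu hv hN0.le le_rfl hu
  obtain ⟨m, hm, hmI⟩ := isPreconnected_Ici.intermediate_value_Ico self_mem_Ici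
    (le_principal_iff.2 (Ici_mem_atTop 0)) (continuousOn_index_right hu hv hN0)
    (tendsto_index_right hu hv hN0) ⟨hzero.trans hI.le, (div_lt_iff₀ hd).1 hN⟩
  refine ⟨m, mem_Ioi.2 (lt_of_le_of_ne hm ?_), hmI⟩
  rintro rfl
  exact hI.not_ge (hmI ▸ hzero)

end Index

section LevelWeight

variable {F : SPEF} {u v I N m : ℝ}

/-- The weight `m` solving `W(N, m) = I`, as a function of the weight `N` of the best arm. A
solution exists only for `I / d(u, v) < N`; elsewhere the value is arbitrary. -/
noncomputable def levelWeight (F : SPEF) (u v I N : ℝ) : ℝ :=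
  Function.invFunOn (F.index u v N) (Ioi 0) I

theorem levelWeight_pos (hu : u ∈ F.S) (hv : v ∈ F.S) (huv : u ≠ v) (hI : 0 < I)
    (hN : I / F.d u v < N) : 0 < F.levelWeight u v I N :=
  Function.invFunOn_mem (exists_index_eq hu hv huv hI hN)

theorem index_levelWeight (hu : u ∈ F.S) (hv : v ∈ F.S) (huv : u ≠ v) (hI : 0 < I)
    (hN : I / F.d u v < N) : F.index u v N (F.levelWeight u v I N) = I :=
  Function.invFunOn_eq (exists_index_eq hu hv huv hI hN)

theorem levelWeight_index (hu : u ∈ F.S) (hv : v ∈ F.S) (huv : u ≠ v) (hN : 0 < N)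
    (hm : 0 < m) : F.levelWeight u v (F.index u v N m) N = m :=
  ((strictMonoOn_index_right hu hv huv hN).injOn.mono Ioi_subset_Ici_self).leftInvOn_invFunOn hm

theorem strictAntiOn_levelWeight (hu : u ∈ F.S) (hv : v ∈ F.S) (huv : u ≠ v) (hI : 0 < I) :
    StrictAntiOn (F.levelWeight u v I) (Ioi (I / F.d u v)) := fun _ hN _ hN' hlt =>
  right_lt_right_of_index_eq hu hv huv ((div_pos hI (d_pos hu hv huv)).trans hN) hlt
    (levelWeight_pos hu hv huv hI hN) (levelWeight_pos hu hv huv hI hN').le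
    ((index_levelWeight hu hv huv hI hN).trans (index_levelWeight hu hv huv hI hN').symm)

theorem image_levelWeight (hu : u ∈ F.S) (hv : v ∈ F.S) (huv : u ≠ v) (hI : 0 < I) :
    F.levelWeight u v I '' Ioi (I / F.d u v) = Ioi (I / F.d v u) := by
  refine Subset.antisymm (image_subset_iff.2 fun N (hN : _ < N) => ?_) fun m (hm : _ < m) => ?_
  · have hN0 := (div_pos hI (d_pos hu hv huv)).trans hN
    have hindex := index_levelWeight hu hv huv hI hN
    rw [index_comm] at hindex
    exact div_d_lt_left_of_index_eq hv hu huv.symm (levelWeight_pos hu hv huv hI hN) hN0.le hindex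
  · have hm0 := (div_pos hI (d_pos hv hu huv.symm)).trans hm
    obtain ⟨N, hN, hindex⟩ := exists_index_eq hv hu huv.symm hI hm
    rw [index_comm] at hindex
    exact ⟨N, div_d_lt_left_of_index_eq hu hv huv hN hm0.le hindex,
      hindex ▸ levelWeight_index hu hv huv hN hm0⟩

theorem continuousOn_levelWeight (hu : u ∈ F.S) (hv : v ∈ F.S) (huv : u ≠ v) (hI : 0 < I) :
    ContinuousOn (F.levelWeight u v I) (Ioi (I / F.d u v)) :=
  continuousOn_of_strictAntiOn_of_ordConnected_image (strictAntiOn_levelWeight hu hv huv hI)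
    ordConnected_Ioi (image_levelWeight hu hv huv hI ▸ ordConnected_Ioi)

end LevelWeight

section AnchorRatio

variable {F : SPEF} {u v I N N' m m' : ℝ}

/-- The summand `d(μ₁, x_{1,a}(N, m)) / d(μ_a, x_{1,a}(N, m))` of the anchor function, for
`u = μ₁` and `v = μ_a`. -/
noncomputable def anchorRatio (F : SPEF) (u v N m : ℝ) : ℝ :=
  F.d u (mix u v N m) / F.d v (mix u v N m)

theorem anchorRatio_mul_mul {c : ℝ} (hc : c ≠ 0) :
    F.anchorRatio u v (c * N) (c * m) = F.anchorRatio u v N m := by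
  rw [anchorRatio, anchorRatio, mix_mul_mul hc]

theorem anchorRatio_nonneg (hu : u ∈ F.S) (hv : v ∈ F.S) (hN : 0 < N) (hm : 0 ≤ m) :
    0 ≤ F.anchorRatio u v N m := by
  have hS := mix_mem_S hu hv hN.le hm (add_pos_of_pos_of_nonneg hN hm)
  exact div_nonneg (d_nonneg hu hS) (d_nonneg hv hS)

theorem anchorRatio_pos (hu : u ∈ F.S) (hv : v ∈ F.S) (huv : v < u) (hN : 0 < N) (hm : 0 < m) :
    0 < F.anchorRatio u v N m := by
  have h : 0 < N + m := add_pos hN hm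
  have hS := mix_mem_S hu hv hN.le hm.le h
  exact div_pos (d_pos hu hS (mix_ne_left huv.ne' hm.ne' h.ne').symm)
    (d_pos hv hS (right_lt_mix huv hN h).ne)

theorem anchorRatio_le_anchorRatio (hu : u ∈ F.S) (hv : v ∈ F.S) (huv : v < u) (hN : 0 < N)
    (hm : 0 ≤ m) (hm' : 0 ≤ m') (hNN' : N ≤ N') (hmm' : m' ≤ m) :
    F.anchorRatio u v N' m' ≤ F.anchorRatio u v N m := by
  have hN' := hN.trans_le hNN'
  refine (strictAntiOn_d_div_d hu hv).antitoneOn (mix_mem_Ioc huv hN hm)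
    (mix_mem_Ioc huv hN' hm') ?_
  rw [mix_le_mix_iff huv (by linarith) (by linarith)]
  gcongr

theorem anchorRatio_lt_anchorRatio (hu : u ∈ F.S) (hv : v ∈ F.S) (huv : v < u) (hN : 0 < N)
    (hm' : 0 ≤ m') (hNN' : N ≤ N') (hmm' : m' < m) :
    F.anchorRatio u v N' m' < F.anchorRatio u v N m := by
  have hN' := hN.trans_le hNN'
  refine strictAntiOn_d_div_d hu hv (mix_mem_Ioc huv hN (hm'.trans hmm'.le))
    (mix_mem_Ioc huv hN' hm') ?_
  rw [mix_lt_mix_iff huv (by linarith) (by linarith)]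
  calc N * m' < N * m := mul_lt_mul_of_pos_left hmm' hN
    _ ≤ N' * m := mul_le_mul_of_nonneg_right hNN' (hm'.trans hmm'.le)

theorem continuousOn_anchorRatio (hu : u ∈ F.S) (hv : v ∈ F.S) (huv : v < u) {f : ℝ → ℝ}
    {s : Set ℝ} (hs : ∀ N ∈ s, 0 < N) (hf : ContinuousOn f s) (hf0 : ∀ N ∈ s, 0 ≤ f N) :
    ContinuousOn (fun N => F.anchorRatio u v N (f N)) s := by
  have hpos : ∀ N ∈ s, 0 < N + f N := fun N hN => add_pos_of_pos_of_nonneg (hs N hN) (hf0 N hN)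
  have hS : MapsTo (fun N => mix u v N (f N)) s F.S := fun N hN =>
    mix_mem_S hu hv (hs N hN).le (hf0 N hN) (hpos N hN)
  have hmix : ContinuousOn (fun N => mix u v N (f N)) s :=
    continuousOn_mix continuousOn_id hf fun N hN => (hpos N hN).ne'
  exact ((F.continuousOn_d u).comp hmix hS).div ((F.continuousOn_d v).comp hmix hS) fun N hN =>
    (d_pos hv (hS hN) (right_lt_mix huv (hs N hN) (hpos N hN)).ne).ne'

theorem tendsto_anchorRatio_left (hu : u ∈ F.S) (hv : v ∈ F.S) (huv : u ≠ v) (hm : 0 ≤ m) :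
    Tendsto (fun N => F.anchorRatio u v N m) atTop (𝓝 0) := by
  have hlim := (tendsto_d_mix_left hu hv u hm).div (tendsto_d_mix_left hu hv v hm)
    (d_pos hv hu huv.symm).ne'
  rwa [d_self, zero_div] at hlim

theorem tendsto_anchorRatio_left_of_antitoneOn (hu : u ∈ F.S) (hv : v ∈ F.S) (huv : v < u)
    {f : ℝ → ℝ} {L : ℝ} (hf : AntitoneOn f (Ioi L)) (hf0 : ∀ N ∈ Ioi L, 0 ≤ f N) :
    Tendsto (fun N => F.anchorRatio u v N (f N)) atTop (𝓝 0) := by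
  have hL : L + 1 ∈ Ioi L := lt_add_one L
  refine squeeze_zero' ?_ ?_ (tendsto_anchorRatio_left hu hv huv.ne' (hf0 _ hL))
  · filter_upwards [eventually_gt_atTop 0, eventually_gt_atTop L] with N hN hLN
    exact anchorRatio_nonneg hu hv hN (hf0 N hLN)
  · filter_upwards [eventually_gt_atTop 0, eventually_ge_atTop (L + 1)] with N hN hLN
    have hNL : N ∈ Ioi L := hL.trans_le hLN
    exact anchorRatio_le_anchorRatio hu hv huv hN (hf0 _ hL) (hf0 N hNL) le_rfl
      (hf hL hNL hLN)

theorem tendsto_anchorRatio_right (hu : u ∈ F.S) (hv : v ∈ F.S) (huv : u ≠ v) (hN : 0 < N) :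
    Tendsto (F.anchorRatio u v N) atTop atTop := by
  have hnum := tendsto_d_mix_right hu hv u hN.le
  have hden : Tendsto (fun m => F.d v (mix u v N m)) atTop (𝓝[>] 0) := by
    refine tendsto_nhdsWithin_iff.2 ⟨F.d_self v ▸ tendsto_d_mix_right hu hv v hN.le, ?_⟩
    filter_upwards [eventually_ge_atTop 0] with m hm
    have h : 0 < N + m := add_pos_of_pos_of_nonneg hN hm
    refine d_pos hv (mix_mem_S hu hv hN.le hm h) ?_
    rw [mix_comm]
    exact (mix_ne_left huv.symm hN.ne' (by linarith)).symm
  exact (hnum.pos_mul_atTop (d_pos hu hv huv) hden.inv_tendsto_nhdsGT_zero).congr fun m =>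
    (div_eq_mul_inv _ _).symm

-- The ratio is homogeneous of degree `0` and the index of degree `1`, so a pair of weights with a
-- large ratio can be rescaled onto the level set of the index.
theorem exists_le_anchorRatio_levelWeight (hu : u ∈ F.S) (hv : v ∈ F.S) (huv : u ≠ v)
    (hI : 0 < I) (r : ℝ) :
    ∃ N, I / F.d u v < N ∧ r ≤ F.anchorRatio u v N (F.levelWeight u v I N) := by
  obtain ⟨m, hr, hm⟩ := (((tendsto_anchorRatio_right hu hv huv one_pos).eventually_ge_atTop r).and
    (eventually_gt_atTop 0)).exists
  have hpos := index_pos hu hv huv one_pos hm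
  have hc : 0 < I / F.index u v 1 m := div_pos hI hpos
  have hindex : F.index u v (I / F.index u v 1 m * 1) (I / F.index u v 1 m * m) = I := by
    rw [index_mul_mul hc.ne', div_mul_cancel₀ _ hpos.ne']
  set c := I / F.index u v 1 m
  have hlevel : F.levelWeight u v I (c * 1) = c * m :=
    hindex ▸ levelWeight_index hu hv huv (mul_pos hc one_pos) (mul_pos hc hm)
  refine ⟨c * 1, div_d_lt_left_of_index_eq hu hv huv (mul_pos hc one_pos) (mul_pos hc hm).le
    hindex, ?_⟩
  rwa [hlevel, anchorRatio_mul_mul hc.ne']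

end AnchorRatio

section AnchoredSolution

variable {ι : Type*} [DecidableEq ι] {F : SPEF} {u : ℝ} {v I n m m' : ι → ℝ} {A B : Finset ι}
  {N N' N₀ L : ℝ} {a : ι}

/-- The anchored index equations: the best arm, of mean `u`, has weight `N`, the arms `a ∈ A`, of
means `v a`, have weights `m a`; the weights `n a` are prescribed off `B` and the index levels
`I a` on `B`. -/
structure IsAnchoredSolution (F : SPEF) (u : ℝ) (v : ι → ℝ) (A B : Finset ι) (I n : ι → ℝ)
    (N : ℝ) (m : ι → ℝ) : Prop where
  left_nonneg : 0 ≤ N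
  right_nonneg : ∀ a ∈ B, 0 ≤ m a
  eq_of_mem_sdiff : ∀ a ∈ A \ B, m a = n a
  sum_anchorRatio : ∑ a ∈ A, F.anchorRatio u (v a) N (m a) = 1
  index_eq : ∀ a ∈ B, F.index u (v a) N (m a) = I a

namespace IsAnchoredSolution

theorem congr (h : F.IsAnchoredSolution u v A B I n N m) (hBA : B ⊆ A)
    (hm : ∀ a ∈ A, m' a = m a) : F.IsAnchoredSolution u v A B I n N m' where
  left_nonneg := h.left_nonneg
  right_nonneg a ha := hm a (hBA ha) ▸ h.right_nonneg a ha
  eq_of_mem_sdiff a ha := (hm a (Finset.sdiff_subset ha)).trans (h.eq_of_mem_sdiff a ha)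
  sum_anchorRatio := by
    rw [← h.sum_anchorRatio]
    exact Finset.sum_congr rfl fun a ha => by rw [hm a ha]
  index_eq a ha := hm a (hBA ha) ▸ h.index_eq a ha

theorem div_d_le_left (h : F.IsAnchoredSolution u v A B I n N m) (hu : u ∈ F.S)
    (hv : v a ∈ F.S) (huv : u ≠ v a) (ha : a ∈ B) : I a / F.d u (v a) ≤ N :=
  div_d_le_left_of_index_eq hu hv huv h.left_nonneg (h.right_nonneg a ha) (h.index_eq a ha)

theorem div_d_le_right (h : F.IsAnchoredSolution u v A B I n N m) (hu : u ∈ F.S)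
    (hv : v a ∈ F.S) (huv : u ≠ v a) (ha : a ∈ B) : I a / F.d (v a) u ≤ m a :=
  div_d_le_right_of_index_eq hu hv huv h.left_nonneg (h.right_nonneg a ha) (h.index_eq a ha)

theorem left_pos (h : F.IsAnchoredSolution u v A B I n N m) (hu : u ∈ F.S) (hv : v a ∈ F.S)
    (huv : u ≠ v a) (ha : a ∈ B) (hI : 0 < I a) : 0 < N :=
  (div_pos hI (d_pos hu hv huv)).trans_le (h.div_d_le_left hu hv huv ha)

theorem right_pos (h : F.IsAnchoredSolution u v A B I n N m) (hu : u ∈ F.S) (hv : v a ∈ F.S)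
    (huv : u ≠ v a) (ha : a ∈ B) (hI : 0 < I a) : 0 < m a :=
  (div_pos hI (d_pos hv hu huv.symm)).trans_le (h.div_d_le_right hu hv huv ha)

-- If `N < N'`, then the weights in `B` drop, so every anchor ratio drops.
theorem left_le (h : F.IsAnchoredSolution u v A B I n N m)
    (h' : F.IsAnchoredSolution u v A B I n N' m') (hu : u ∈ F.S) (hv : ∀ a ∈ A, v a ∈ F.S)
    (hvu : ∀ a ∈ A, v a < u) (hBA : B ⊆ A) (hB : B.Nonempty) (hI : ∀ a ∈ B, 0 < I a)
    (hn : ∀ a ∈ A \ B, 0 ≤ n a) : N' ≤ N := by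
  by_contra! hlt
  obtain ⟨b, hb⟩ := hB
  have hN : 0 < N := h.left_pos hu (hv b (hBA hb)) (hvu b (hBA hb)).ne' hb (hI b hb)
  have hBlt : ∀ a ∈ B, F.anchorRatio u (v a) N' (m' a) < F.anchorRatio u (v a) N (m a) := by
    intro a ha
    have huv := hvu a (hBA ha)
    have hva := hv a (hBA ha)
    have hm' := h'.right_nonneg a ha
    exact anchorRatio_lt_anchorRatio hu hva huv hN hm' hlt.le
      (right_lt_right_of_index_eq hu hva huv.ne' hN hlt (h.right_pos hu hva huv.ne' ha (hI a ha))
        hm' ((h.index_eq a ha).trans (h'.index_eq a ha).symm))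
  have hsum : ∑ a ∈ A, F.anchorRatio u (v a) N' (m' a) <
      ∑ a ∈ A, F.anchorRatio u (v a) N (m a) := by
    refine Finset.sum_lt_sum (fun a ha => ?_) ⟨b, hBA hb, hBlt b hb⟩
    by_cases haB : a ∈ B
    · exact (hBlt a haB).le
    · have hAB := Finset.mem_sdiff.2 ⟨ha, haB⟩
      rw [h.eq_of_mem_sdiff a hAB, h'.eq_of_mem_sdiff a hAB]
      exact anchorRatio_le_anchorRatio hu (hv a ha) (hvu a ha) hN (hn a hAB) (hn a hAB) hlt.le
        le_rfl
  rw [h.sum_anchorRatio, h'.sum_anchorRatio] at hsum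
  exact hsum.false

theorem right_eq (h : F.IsAnchoredSolution u v A B I n N m)
    (h' : F.IsAnchoredSolution u v A B I n N m') (hu : u ∈ F.S) (hv : v a ∈ F.S)
    (huv : u ≠ v a) (ha : a ∈ B) (hI : 0 < I a) : m a = m' a :=
  (strictMonoOn_index_right hu hv huv (h.left_pos hu hv huv ha hI)).injOn
    (h.right_nonneg a ha) (h'.right_nonneg a ha) ((h.index_eq a ha).trans (h'.index_eq a ha).symm)

-- The arms of `B` contribute a positive amount to the anchor sum, so at `N` the other arms
-- contribute less than `1`.
theorem le_left_of_one_le_sum (h : F.IsAnchoredSolution u v A B I n N m) (hu : u ∈ F.S)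
    (hv : ∀ a ∈ A, v a ∈ F.S) (hvu : ∀ a ∈ A, v a < u) (hBA : B ⊆ A) (hB : B.Nonempty)
    (hI : ∀ a ∈ B, 0 < I a) (hn : ∀ a ∈ A \ B, 0 ≤ n a)
    (h₀ : 1 ≤ ∑ a ∈ A \ B, F.anchorRatio u (v a) N₀ (n a)) : N₀ ≤ N := by
  by_contra! hlt
  obtain ⟨b, hb⟩ := hB
  have hN : 0 < N := h.left_pos hu (hv b (hBA hb)) (hvu b (hBA hb)).ne' hb (hI b hb)
  have hpos : ∀ a ∈ B, 0 < F.anchorRatio u (v a) N (m a) := fun a ha =>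
    have huv := hvu a (hBA ha)
    have hva := hv a (hBA ha)
    anchorRatio_pos hu hva huv hN (h.right_pos hu hva huv.ne' ha (hI a ha))
  refine (h₀.trans_lt ?_).false
  calc ∑ a ∈ A \ B, F.anchorRatio u (v a) N₀ (n a)
      ≤ ∑ a ∈ A \ B, F.anchorRatio u (v a) N (m a) := by
        refine Finset.sum_le_sum fun a ha => ?_
        have haA := Finset.sdiff_subset ha
        rw [h.eq_of_mem_sdiff a ha]
        exact anchorRatio_le_anchorRatio hu (hv a haA) (hvu a haA) hN (hn a ha) (hn a ha) hlt.le
          le_rfl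
    _ < ∑ a ∈ A, F.anchorRatio u (v a) N (m a) := by
        rw [← Finset.sum_sdiff hBA]
        exact lt_add_of_pos_right _ (Finset.sum_pos hpos ⟨b, hb⟩)
    _ = 1 := h.sum_anchorRatio

end IsAnchoredSolution

/-- The weight of the arm `a` as a function of the weight `N` of the best arm once every equation
but the anchor equation is imposed. -/
noncomputable def responseWeight (F : SPEF) (u : ℝ) (v : ι → ℝ) (B : Finset ι) (I n : ι → ℝ)
    (a : ι) (N : ℝ) : ℝ :=
  if a ∈ B then F.levelWeight u (v a) (I a) N else n a

theorem responseWeight_of_mem (ha : a ∈ B) :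
    F.responseWeight u v B I n a = F.levelWeight u (v a) (I a) :=
  funext fun _ => if_pos ha

theorem responseWeight_of_notMem (ha : a ∉ B) :
    F.responseWeight u v B I n a = fun _ => n a :=
  funext fun _ => if_neg ha

theorem responseWeight_nonneg (hu : u ∈ F.S) (hv : v a ∈ F.S) (huv : u ≠ v a)
    (hI : a ∈ B → 0 < I a) (hn : a ∉ B → 0 ≤ n a) (hL : a ∈ B → I a / F.d u (v a) ≤ L) :
    ∀ N ∈ Ioi L, 0 ≤ F.responseWeight u v B I n a N := by
  intro N hN
  by_cases ha : a ∈ B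
  · rw [responseWeight_of_mem ha]
    exact (levelWeight_pos hu hv huv (hI ha) ((hL ha).trans_lt hN)).le
  · rw [responseWeight_of_notMem ha]
    exact hn ha

theorem antitoneOn_responseWeight (hu : u ∈ F.S) (hv : v a ∈ F.S) (huv : u ≠ v a)
    (hI : a ∈ B → 0 < I a) (hL : a ∈ B → I a / F.d u (v a) ≤ L) :
    AntitoneOn (F.responseWeight u v B I n a) (Ioi L) := by
  by_cases ha : a ∈ B
  · rw [responseWeight_of_mem ha]
    exact (strictAntiOn_levelWeight hu hv huv (hI ha)).antitoneOn.mono (Ioi_subset_Ioi (hL ha))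
  · rw [responseWeight_of_notMem ha]
    exact antitoneOn_const

theorem continuousOn_responseWeight (hu : u ∈ F.S) (hv : v a ∈ F.S) (huv : u ≠ v a)
    (hI : a ∈ B → 0 < I a) (hL : a ∈ B → I a / F.d u (v a) ≤ L) :
    ContinuousOn (F.responseWeight u v B I n a) (Ioi L) := by
  by_cases ha : a ∈ B
  · rw [responseWeight_of_mem ha]
    exact (continuousOn_levelWeight hu hv huv (hI ha)).mono (Ioi_subset_Ioi (hL ha))
  · rw [responseWeight_of_notMem ha]
    exact continuousOn_const

theorem isAnchoredSolution_responseWeight (hu : u ∈ F.S) (hv : ∀ a ∈ B, v a ∈ F.S)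
    (huv : ∀ a ∈ B, u ≠ v a) (hI : ∀ a ∈ B, 0 < I a) (hL : ∀ a ∈ B, I a / F.d u (v a) < N)
    (hN : 0 ≤ N)
    (hsum : ∑ a ∈ A, F.anchorRatio u (v a) N (F.responseWeight u v B I n a N) = 1) :
    F.IsAnchoredSolution u v A B I n N (F.responseWeight u v B I n · N) where
  left_nonneg := hN
  right_nonneg a ha := by
    rw [responseWeight_of_mem ha]
    exact (levelWeight_pos hu (hv a ha) (huv a ha) (hI a ha) (hL a ha)).le
  eq_of_mem_sdiff a ha := by rw [responseWeight_of_notMem (Finset.mem_sdiff.1 ha).2]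
  sum_anchorRatio := hsum
  index_eq a ha := by
    rw [responseWeight_of_mem ha]
    exact index_levelWeight hu (hv a ha) (huv a ha) (hI a ha) (hL a ha)

theorem exists_isAnchoredSolution (hu : u ∈ F.S) (hv : ∀ a ∈ A, v a ∈ F.S)
    (hvu : ∀ a ∈ A, v a < u) (hBA : B ⊆ A) (hB : B.Nonempty) (hI : ∀ a ∈ B, 0 < I a)
    (hn : ∀ a ∈ A \ B, 0 ≤ n a) : ∃ N m, F.IsAnchoredSolution u v A B I n N m := by
  obtain ⟨b, hb, hmax⟩ := B.exists_max_image (fun a => I a / F.d u (v a)) hB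
  set L := I b / F.d u (v b)
  have hL : 0 < L := div_pos (hI b hb) (d_pos hu (hv b (hBA hb)) (hvu b (hBA hb)).ne')
  have hnA (a) (ha : a ∈ A) (haB : a ∉ B) : 0 ≤ n a := hn a (Finset.mem_sdiff.2 ⟨ha, haB⟩)
  set w := F.responseWeight u v B I n
  have hw (a) (ha : a ∈ A) : ∀ N ∈ Ioi L, 0 ≤ w a N :=
    responseWeight_nonneg hu (hv a ha) (hvu a ha).ne' (hI a) (hnA a ha) (hmax a)
  set G : ℝ → ℝ := fun N => ∑ a ∈ A, F.anchorRatio u (v a) N (w a N)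
  have hGcont : ContinuousOn G (Ioi L) := continuousOn_finsetSum _ fun a ha =>
    continuousOn_anchorRatio hu (hv a ha) (hvu a ha) (fun _ => hL.trans)
      (continuousOn_responseWeight hu (hv a ha) (hvu a ha).ne' (hI a) (hmax a)) (hw a ha)
  have hGlim : Tendsto G atTop (𝓝 0) := by
    rw [← Finset.sum_const_zero (s := A)]
    exact tendsto_finsetSum _ fun a ha => tendsto_anchorRatio_left_of_antitoneOn hu (hv a ha)
      (hvu a ha) (antitoneOn_responseWeight hu (hv a ha) (hvu a ha).ne' (hI a) (hmax a)) (hw a ha)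
  obtain ⟨N₁, hN₁, hG₁⟩ : ∃ N ∈ Ioi L, 1 ≤ G N := by
    obtain ⟨N, hN, h1⟩ := exists_le_anchorRatio_levelWeight hu (hv b (hBA hb))
      (hvu b (hBA hb)).ne' (hI b hb) 1
    rw [← responseWeight_of_mem (v := v) (n := n) hb] at h1
    exact ⟨N, hN, h1.trans (Finset.single_le_sum (fun a ha =>
      anchorRatio_nonneg hu (hv a ha) (hL.trans hN) (hw a ha N hN)) (hBA hb))⟩
  obtain ⟨N, hN, hGN⟩ := isPreconnected_Ioi.intermediate_value_Ioc hN₁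
    (le_principal_iff.2 (Ioi_mem_atTop L)) hGcont hGlim ⟨one_pos, hG₁⟩
  exact ⟨N, _, isAnchoredSolution_responseWeight hu (fun a ha => hv a (hBA ha))
    (fun a ha => (hvu a (hBA ha)).ne') hI (fun a ha => (hmax a ha).trans_lt hN) (hL.trans hN).le
    hGN⟩

end AnchoredSolution

end SPEF

/-- Theorem 2.1 / Theorem A.1 of the paper: existence and uniqueness of
the positive solution to the anchored index equations, together with lower bounds. -/
theorem statement_0 {K : ℕ} [NeZero K] (M : Bandit K)
    (B : Finset (Fin K)) (hBne : B.Nonempty) (hBsub : B ⊆ alt K)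
    (I : Fin K → ℝ) (hI : ∀ a ∈ B, 0 < I a)
    (Nout : Fin K → ℝ) (hNout : ∀ a ∈ alt K \ B, 0 ≤ Nout a)
    (N11 : ℝ)
    (hN11zero : (alt K \ B = ∅ ∨ ∑ a ∈ alt K \ B, Nout a = 0) → N11 = 0)
    (hN11pos : ¬ (alt K \ B = ∅ ∨ ∑ a ∈ alt K \ B, Nout a = 0) →
      0 < N11 ∧
        ∑ a ∈ alt K \ B,
          M.d (M.μ 0) (M.x1 a N11 (Nout a)) / M.d (M.μ a) (M.x1 a N11 (Nout a)) = 1) :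
    ∃ Nv : Fin K → ℝ,
      -- existence
      ((0 ≤ Nv 0 ∧ (∀ a ∈ B, 0 ≤ Nv a) ∧ (∀ a ∈ alt K \ B, Nv a = Nout a)) ∧
        (∑ a ∈ alt K,
          M.d (M.μ 0) (M.x1 a (Nv 0) (Nv a)) / M.d (M.μ a) (M.x1 a (Nv 0) (Nv a)) = 1) ∧
        (∀ a ∈ B, M.W a (Nv 0) (Nv a) = I a)) ∧
      -- uniqueness
      (∀ Nv' : Fin K → ℝ,
        ((0 ≤ Nv' 0 ∧ (∀ a ∈ B, 0 ≤ Nv' a) ∧ (∀ a ∈ alt K \ B, Nv' a = Nout a)) ∧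
          (∑ a ∈ alt K,
            M.d (M.μ 0) (M.x1 a (Nv' 0) (Nv' a)) / M.d (M.μ a) (M.x1 a (Nv' 0) (Nv' a)) = 1) ∧
          (∀ a ∈ B, M.W a (Nv' 0) (Nv' a) = I a)) →
        Nv' 0 = Nv 0 ∧ ∀ a ∈ B, Nv' a = Nv a) ∧
      -- lower bounds
      max N11 (B.sup' hBne fun a => I a / M.d (M.μ 0) (M.μ a)) ≤ Nv 0 ∧
      ∀ a ∈ B, I a / M.d (M.μ a) (M.μ 0) ≤ Nv a := by
  have hu : M.μ 0 ∈ M.S := M.μ_mem 0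
  have hv : ∀ a ∈ alt K, M.μ a ∈ M.S := fun a _ => M.μ_mem a
  have hne : ∀ a ∈ alt K, a ≠ 0 := fun a ha => (Finset.mem_filter.1 ha).2
  have hvu : ∀ a ∈ alt K, M.μ a < M.μ 0 := fun a ha => M.μ_best a (hne a ha)
  obtain ⟨N, m, hm⟩ := SPEF.exists_isAnchoredSolution hu hv hvu hBsub hBne hI hNout
  have h : M.IsAnchoredSolution (M.μ 0) M.μ (alt K) B I Nout N (Function.update m 0 N) :=
    hm.congr hBsub fun a ha => Function.update_of_ne (hne a ha) _ _
  refine ⟨Function.update m 0 N, ?_⟩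
  rw [Function.update_self]
  refine ⟨⟨⟨h.left_nonneg, h.right_nonneg, h.eq_of_mem_sdiff⟩, h.sum_anchorRatio, h.index_eq⟩,
    ?_, max_le ?_ (Finset.sup'_le hBne _ fun a ha => ?_), fun a ha => ?_⟩
  · rintro Nv' ⟨⟨h0, hB, hout⟩, hsum, hindex⟩
    have h' : M.IsAnchoredSolution (M.μ 0) M.μ (alt K) B I Nout (Nv' 0) Nv' :=
      ⟨h0, hB, hout, hsum, hindex⟩
    have hN : Nv' 0 = N := (h.left_le h' hu hv hvu hBsub hBne hI hNout).antisymm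
      (h'.left_le h hu hv hvu hBsub hBne hI hNout)
    exact ⟨hN, fun a ha => (hN ▸ h').right_eq h hu (M.μ_mem a) (hvu a (hBsub ha)).ne' ha (hI a ha)⟩
  · by_cases hout : alt K \ B = ∅ ∨ ∑ a ∈ alt K \ B, Nout a = 0
    · exact (hN11zero hout).trans_le h.left_nonneg
    · exact h.le_left_of_one_le_sum hu hv hvu hBsub hBne hI hNout (hN11pos hout).2.ge
  · exact h.div_d_le_left hu (M.μ_mem a) (hvu a (hBsub ha)).ne' ha
  · exact h.div_d_le_right hu (M.μ_mem a) (hvu a (hBsub ha)).ne' ha
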